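/- There exists a constant C > 0, depending only on the lattice Λ and the vortex data (p₁,…,pₙ, m₁,…,mₙ) and independent of λ and μ, such that for all λ, μ > 0 and every solution (u, N) of the Maxwell–Chern–Simons vortex equations with parameters λ, μ, the function u − u₀ + N/μ (which extends to a smooth Λ-periodic function on all of ℝ², since the logarithmic singularities of u and u₀ cancel) satisfies sup_{x ∈ ℝ²} |∇(u − u₀ + N/μ)(x)| ≤ Cλ. -/

import Mathlib

/-!
Put `c = 4π𝔐` and `h = λ eᵘ (λ − N)`. The two vortex equations and `Δu₀ = −c` combine, away from
`Z + Λ`, to `Δv = c − h` for `v = u − u₀ + N/μ`; both sides are continuous and `Z + Λ` is countable,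
so the identity holds everywhere.

*Bounds on `Δv`.* Evaluating the equations at a maximum of `eᵘ` and at the extrema of `N` gives
`eᵘ ≤ 1` and `0 ≤ N ≤ λ` (`mcs_bounds`), hence `0 ≤ h ≤ λ²`. Since `Δv` has mean zero over a period
(`integral_lap_box`), `h` has mean `c`. Therefore `c ≤ λ²` and `|Δv| ≤ λ²`, while `Δv` is bounded in
`L¹` of a period by a constant that does not involve `λ` or `μ`.

*Gradient.* Averaging `v` against the first Fourier mode `θ ↦ e · (cos θ, sin θ)` on circles about
`x` turns `Δv` into a second-order operator in the radius. Integrating it gives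
(`gradient_formula`), for `M(r)` and `F(r)` the modes of `v` and of `Δv` at radius `r`,
`2π Dv(x) e = 2 M(R) / R − ∫₀ᴿ F(r) (1 − r²/R²) dr`.
Let `x` be a point where `‖Dv‖` attains its maximum `G`. By periodicity `v` oscillates by at most
`G d` with `d = ‖a₁‖ + ‖a₂‖`, so for `R = 4d` the first term is at most `π G ‖e‖`, half of
the largest value `2π G ‖e‖` of the left-hand side. The integral is split at `r = 1/λ`.
On `r ≤ 1/λ` the bound `|Δv| ≤ λ²` gives `O(λ)`. On `r > 1/λ` one has `|F| ≤ λ r |F|`, and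
`∫ r |F| dr` is bounded by the `L¹` norm of `Δv` over a disc, hence by that over finitely many
periods (`disc_le_box`). Both parts are `O(λ)` with constants depending only on the lattice and `c`.
-/

open MeasureTheory Real Filter Metric Set

noncomputable section

/-- The plane `ℝ²`. -/
abbrev R2 : Type := EuclideanSpace ℝ (Fin 2)

/-- The Laplacian `Δf = ∂²f/∂x₁² + ∂²f/∂x₂²`. -/
def lap (f : R2 → ℝ) (x : R2) : ℝ :=
  ∑ i : Fin 2,
    fderiv ℝ (fun y => fderiv ℝ f y (EuclideanSpace.single i 1)) x (EuclideanSpace.single i 1)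

/-- The lattice `Λ = ℤa₁ + ℤa₂`. -/
def lattice (a1 a2 : R2) : Set R2 := {x | ∃ k l : ℤ, x = (k : ℝ) • a1 + (l : ℝ) • a2}

/-- The fundamental cell `Ω = {t₁a₁ + t₂a₂ : 0 < t₁, t₂ < 1}`. -/
def cell (a1 a2 : R2) : Set R2 :=
  {x | ∃ t1 t2 : ℝ, t1 ∈ Set.Ioo (0:ℝ) 1 ∧ t2 ∈ Set.Ioo (0:ℝ) 1 ∧ x = t1 • a1 + t2 • a2}

/-- `Λ`-periodicity of a function on `ℝ²`. -/
def Periodic2 (a1 a2 : R2) (f : R2 → ℝ) : Prop :=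
  ∀ x : R2, ∀ w ∈ lattice a1 a2, f (x + w) = f x

/-- The torus and vortex data: a lattice with fundamental cell of area 1, and distinct
vortex points `p₁, …, pₙ ∈ Ω` with positive multiplicities `m₁, …, mₙ`. -/
structure VortexData where
  a1 : R2
  a2 : R2
  indep : LinearIndependent ℝ ![a1, a2]
  area_one : volume (cell a1 a2) = 1
  n : ℕ
  p : Fin n → R2
  m : Fin n → ℕ
  m_pos : ∀ i, 0 < m i
  p_mem : ∀ i, p i ∈ cell a1 a2
  p_inj : Function.Injective p

/-- The singular set `Z + Λ`. -/
def VortexData.sing (D : VortexData) : Set R2 :=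
  {x | ∃ i : Fin D.n, ∃ w ∈ lattice D.a1 D.a2, x = D.p i + w}

/-- The total vortex number `𝔐 = Σᵢ mᵢ`. -/
def VortexData.M (D : VortexData) : ℝ := ∑ i, (D.m i : ℝ)

open Classical in
/-- `e^u`, extended continuously by the value `0` on `Z + Λ`. -/
def VortexData.expu (D : VortexData) (u : R2 → ℝ) (x : R2) : ℝ :=
  if x ∈ D.sing then 0 else Real.exp (u x)

/-- `(u, N)` is a solution of the Maxwell–Chern–Simons vortex equations with
parameters `λ, μ`:  `u`, `N` are `Λ`-periodic, `u` is smooth away from `Z + Λ` with the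
prescribed logarithmic behaviour `u(x) = 2mᵢ ln|x − pᵢ| + smooth` near each vortex point,
`N` is smooth, and the equations `Δu = λμ eᵘ − μN` (away from `Z + Λ`) and
`ΔN = μ(μ + λeᵘ)N − λμ(μ + λ)eᵘ` (everywhere, with `eᵘ` extended by `0` on `Z + Λ`)
hold pointwise. -/
def IsMCSSolution (D : VortexData) (lam mu : ℝ) (u N : R2 → ℝ) : Prop :=
  Periodic2 D.a1 D.a2 u ∧ Periodic2 D.a1 D.a2 N ∧
  ContDiffOn ℝ (⊤ : ℕ∞) u D.singᶜ ∧ ContDiff ℝ (⊤ : ℕ∞) N ∧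
  (∀ i : Fin D.n, ∃ ε > (0:ℝ), ∃ v : R2 → ℝ, ContDiffOn ℝ (⊤ : ℕ∞) v (Metric.ball (D.p i) ε) ∧
    ∀ x ∈ Metric.ball (D.p i) ε, x ≠ D.p i →
      u x = v x + 2 * (D.m i : ℝ) * Real.log ‖x - D.p i‖) ∧
  (∀ x ∉ D.sing, lap u x = lam * mu * Real.exp (u x) - mu * N x) ∧
  (∀ x : R2, lap N x = mu * (mu + lam * D.expu u x) * N x - lam * mu * (mu + lam) * D.expu u x)

/-- `u₀` is the unique `Λ`-periodic function, smooth away from `Z + Λ`, with the logarithmic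
behaviour `2mᵢ ln|x − pᵢ|` near each vortex point, satisfying `Δu₀ = −4π𝔐` away from `Z + Λ`
and `∫_Ω u₀ = 0`. -/
def IsU0 (D : VortexData) (u0 : R2 → ℝ) : Prop :=
  Periodic2 D.a1 D.a2 u0 ∧ ContDiffOn ℝ (⊤ : ℕ∞) u0 D.singᶜ ∧
  (∀ i : Fin D.n, ∃ ε > (0:ℝ), ∃ v : R2 → ℝ, ContDiffOn ℝ (⊤ : ℕ∞) v (Metric.ball (D.p i) ε) ∧
    ∀ x ∈ Metric.ball (D.p i) ε, x ≠ D.p i →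
      u0 x = v x + 2 * (D.m i : ℝ) * Real.log ‖x - D.p i‖) ∧
  (∀ x ∉ D.sing, lap u0 x = -(4 * π) * D.M) ∧
  (∫ x in cell D.a1 D.a2, u0 x) = 0

open scoped Topology

/-! ### The gradient formula from circular Fourier modes -/

/-- Differentiation under the integral sign for a jointly continuous derivative. -/
theorem hasDerivAt_param (F F' : ℝ → ℝ → ℝ) (a b : ℝ)
    (hF : Continuous (fun p : ℝ × ℝ => F p.1 p.2)) (hF' : Continuous (fun p : ℝ × ℝ => F' p.1 p.2))
    (h : ∀ r t, HasDerivAt (fun r => F r t) (F' r t) r) (r : ℝ) :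
    HasDerivAt (fun r => ∫ t in a..b, F r t) (∫ t in a..b, F' r t) r := by
  obtain ⟨K, hK⟩ := ((isCompact_Icc (a := r - 1) (b := r + 1)).prod
    (isCompact_uIcc (a := a) (b := b))).exists_bound_of_continuousOn hF'.continuousOn
  refine (intervalIntegral.hasDerivAt_integral_of_dominated_loc_of_deriv_le
    (s := Icc (r - 1) (r + 1)) (bound := fun _ => K) (F := F) (F' := F')
    (Icc_mem_nhds (by linarith) (by linarith)) ?_ ?_ ?_ ?_ ?_ ?_).2
  · exact Eventually.of_forall fun x => (hF.comp (by fun_prop : Continuous fun t : ℝ => (x, t))).aestronglyMeasurable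
  · exact (hF.comp (by fun_prop : Continuous fun t : ℝ => (r, t))).intervalIntegrable _ _
  · exact (hF'.comp (by fun_prop : Continuous fun t : ℝ => (r, t))).aestronglyMeasurable
  · exact Eventually.of_forall fun t ht x hx => hK (x, t) ⟨hx, uIoc_subset_uIcc ht⟩
  · exact intervalIntegrable_const
  · exact Eventually.of_forall fun t _ x _ => h x t

/-- The unit vector at angle `θ`. -/
def dir (θ : ℝ) : R2 := !₂[Real.cos θ, Real.sin θ]

/-- The unit vector at angle `θ + π/2`, which is the derivative of `dir` at `θ`. -/
def dir' (θ : ℝ) : R2 := !₂[-Real.sin θ, Real.cos θ]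

theorem dir_eq (θ : ℝ) : dir θ = Real.cos θ • EuclideanSpace.single 0 1
    + Real.sin θ • EuclideanSpace.single 1 1 := by
  ext i; fin_cases i <;> simp [dir]

theorem dir'_eq (θ : ℝ) : dir' θ = (-Real.sin θ) • EuclideanSpace.single 0 1
    + Real.cos θ • EuclideanSpace.single 1 1 := by
  ext i; fin_cases i <;> simp [dir']

theorem continuous_dir : Continuous dir := by
  rw [funext dir_eq]; fun_prop

theorem continuous_dir' : Continuous dir' := by
  rw [funext dir'_eq]; fun_prop

theorem hasDerivAt_dir (θ : ℝ) : HasDerivAt dir (dir' θ) θ := by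
  rw [funext dir_eq, dir'_eq]
  exact ((Real.hasDerivAt_cos θ).smul_const _).add ((Real.hasDerivAt_sin θ).smul_const _)

theorem hasDerivAt_dir' (θ : ℝ) : HasDerivAt dir' (-dir θ) θ := by
  rw [funext dir'_eq, dir_eq, neg_add, ← neg_smul, ← neg_smul]
  exact ((Real.hasDerivAt_sin θ).neg.smul_const _).add ((Real.hasDerivAt_cos θ).smul_const _)

theorem norm_dir (θ : ℝ) : ‖dir θ‖ = 1 := by
  simp [dir, EuclideanSpace.norm_eq]

theorem contDiff_fderiv {v : R2 → ℝ} (hv : ContDiff ℝ (⊤ : ℕ∞) v) :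
    ContDiff ℝ (⊤ : ℕ∞) (fderiv ℝ v) :=
  hv.fderiv_right (by norm_cast)

theorem lap_eq {v : R2 → ℝ} {x : R2} (hv : DifferentiableAt ℝ (fderiv ℝ v) x) :
    lap v x = fderiv ℝ (fderiv ℝ v) x (EuclideanSpace.single 0 1) (EuclideanSpace.single 0 1)
      + fderiv ℝ (fderiv ℝ v) x (EuclideanSpace.single 1 1) (EuclideanSpace.single 1 1) := by
  simp only [lap, Fin.sum_univ_two]
  congr 1 <;>
  · rw [fderiv_clm_apply hv (by fun_prop)]
    simp

theorem continuous_lap {v : R2 → ℝ} (hv : ContDiff ℝ (⊤ : ℕ∞) v) : Continuous (lap v) := by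
  have h1 := contDiff_fderiv hv
  have h2 : Continuous (fderiv ℝ (fderiv ℝ v)) := h1.continuous_fderiv (by simp)
  have : lap v = fun x => fderiv ℝ (fderiv ℝ v) x (EuclideanSpace.single 0 1) (EuclideanSpace.single 0 1)
      + fderiv ℝ (fderiv ℝ v) x (EuclideanSpace.single 1 1) (EuclideanSpace.single 1 1) :=
    funext fun x => lap_eq (h1.differentiable (by simp) x)
  rw [this]; fun_prop

/-- The Laplacian in a rotated orthonormal frame: the trace of the Hessian is rotation invariant. -/
theorem lap_eq_dir {v : R2 → ℝ} {x : R2} (hv : DifferentiableAt ℝ (fderiv ℝ v) x) (θ : ℝ) :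
    lap v x = fderiv ℝ (fderiv ℝ v) x (dir θ) (dir θ)
      + fderiv ℝ (fderiv ℝ v) x (dir' θ) (dir' θ) := by
  rw [lap_eq hv, dir_eq, dir'_eq]
  simp only [map_add, map_smul, add_apply, smul_apply,
    smul_eq_mul]
  linear_combination (-1 : ℝ) * (fderiv ℝ (fderiv ℝ v) x (EuclideanSpace.single 0 1) (EuclideanSpace.single 0 1)
      + fderiv ℝ (fderiv ℝ v) x (EuclideanSpace.single 1 1) (EuclideanSpace.single 1 1)) *
    (Real.sin_sq_add_cos_sq θ)

/-- The first Fourier mode with coefficients the coordinates of `e`, that is, the inner product of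
`e` with `dir θ`. -/
def mode (e : R2) (θ : ℝ) : ℝ := e 0 * Real.cos θ + e 1 * Real.sin θ

theorem continuous_mode (e : R2) : Continuous (mode e) := by unfold mode; fun_prop

theorem abs_mode_le (e : R2) (θ : ℝ) : |mode e θ| ≤ ‖e‖ := by
  apply abs_le_of_sq_le_sq _ (norm_nonneg e)
  rw [EuclideanSpace.norm_sq_eq, Fin.sum_univ_two, Real.norm_eq_abs, Real.norm_eq_abs, sq_abs,
    sq_abs, mode]
  nlinarith [sq_nonneg (e 0 * Real.sin θ - e 1 * Real.cos θ), Real.sin_sq_add_cos_sq θ]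

theorem integral_mode (e : R2) : ∫ θ in (-π)..π, mode e θ = 0 := by
  unfold mode
  rw [intervalIntegral.integral_add (Continuous.intervalIntegrable (by fun_prop) _ _)
    (Continuous.intervalIntegrable (by fun_prop) _ _)]
  simp

/-- Projection of a linear form on the unit circle onto the first Fourier mode. -/
theorem integral_clm_mode (L : R2 →L[ℝ] ℝ) (e : R2) :
    ∫ θ in (-π)..π, L (dir θ) * mode e θ = π * L e := by
  have he : e = e 0 • EuclideanSpace.single 0 1 + e 1 • EuclideanSpace.single 1 1 := by
    ext i; fin_cases i <;> simp
  have h1 : ∀ θ, L (dir θ) * mode e θ = L (EuclideanSpace.single 0 1) * e 0 * Real.cos θ ^ 2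
      + L (EuclideanSpace.single 1 1) * e 1 * Real.sin θ ^ 2
      + (L (EuclideanSpace.single 0 1) * e 1 + L (EuclideanSpace.single 1 1) * e 0)
        * (Real.sin θ * Real.cos θ) := by
    intro θ
    rw [dir_eq, mode]; simp only [map_add, map_smul, smul_eq_mul]; ring
  simp_rw [h1]
  have hI : ∀ f : ℝ → ℝ, Continuous f → IntervalIntegrable f volume (-π) π :=
    fun f hf => hf.intervalIntegrable _ _
  rw [intervalIntegral.integral_add (hI _ (by fun_prop)) (hI _ (by fun_prop)),
    intervalIntegral.integral_add (hI _ (by fun_prop)) (hI _ (by fun_prop)),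
    intervalIntegral.integral_const_mul, intervalIntegral.integral_const_mul,
    intervalIntegral.integral_const_mul, integral_cos_sq, integral_sin_sq,
    integral_sin_mul_cos₁]
  conv_rhs => rw [he]
  simp only [map_add, map_smul, smul_eq_mul]
  simp
  ring

/-- The first Fourier modes `M(r)` of `v` and `F(r)` of its Laplacian on circles of radius `r` about
`x` satisfy `M'' + M'/r - M/r² = F`. Consequently `F(r) (1 - r²/R²)` is the derivative of
`M' + M/r - (r² M' - r M)/R²`, and comparing the values at `0` and `R` expresses the gradient at the
centre. -/
theorem gradient_formula {v : R2 → ℝ} (hv : ContDiff ℝ (⊤ : ℕ∞) v) (x e : R2) {R : ℝ} (hR : 0 < R) :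
    2 * π * fderiv ℝ v x e = 2 * (∫ θ in (-π)..π, v (x + R • dir θ) * mode e θ) / R
      - ∫ r in (0:ℝ)..R, (∫ θ in (-π)..π, lap v (x + r • dir θ) * mode e θ) * (1 - r ^ 2 / R ^ 2) := by
  have hg := contDiff_fderiv hv
  set g := fderiv ℝ v with hgdef
  have hgc : Continuous g := hg.continuous
  have hvc : Continuous v := hv.continuous
  have hDc : Continuous (fderiv ℝ g) := hg.continuous_fderiv (by simp)
  have hlc := continuous_lap hv
  have hvd : ∀ y, HasFDerivAt v (g y) y := fun y => (hv.differentiable (by simp) y).hasFDerivAt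
  have hgd : ∀ y, HasFDerivAt g (fderiv ℝ g y) y :=
    fun y => (hg.differentiable (by simp) y).hasFDerivAt
  have hm := continuous_mode e
  have hd := continuous_dir
  have hd' := continuous_dir'
  set M : ℝ → ℝ := fun r => ∫ θ in (-π)..π, v (x + r • dir θ) * mode e θ with hM
  set M1 : ℝ → ℝ := fun r => ∫ θ in (-π)..π, g (x + r • dir θ) (dir θ) * mode e θ with hM1
  set M2 : ℝ → ℝ := fun r => ∫ θ in (-π)..π,
    fderiv ℝ g (x + r • dir θ) (dir θ) (dir θ) * mode e θ with hM2
  set F : ℝ → ℝ := fun r => ∫ θ in (-π)..π, lap v (x + r • dir θ) * mode e θ with hF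
  have hray : ∀ r θ, HasDerivAt (fun r : ℝ => x + r • dir θ) (dir θ) r := fun r θ => by
    simpa using ((hasDerivAt_id r).smul_const (dir θ)).const_add x
  have hM' : ∀ r, HasDerivAt M (M1 r) r := by
    intro r
    refine hasDerivAt_param (fun r θ => v (x + r • dir θ) * mode e θ)
      (fun r θ => g (x + r • dir θ) (dir θ) * mode e θ) _ _ (by fun_prop) (by fun_prop) ?_ r
    intro r θ
    exact ((hvd _).comp_hasDerivAt r (hray r θ)).mul_const _
  have hM1' : ∀ r, HasDerivAt M1 (M2 r) r := by
    intro r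
    refine hasDerivAt_param (fun r θ => g (x + r • dir θ) (dir θ) * mode e θ)
      (fun r θ => fderiv ℝ g (x + r • dir θ) (dir θ) (dir θ) * mode e θ) _ _
      (by fun_prop) (by fun_prop) ?_ r
    intro r θ
    have h1 := (hgd _).comp_hasDerivAt r (hray r θ)
    have h2 := h1.clm_apply (hasDerivAt_const r (dir θ))
    simpa using h2.mul_const (mode e θ)
  -- two integrations by parts in the angle
  have hang : ∀ r, ∫ θ in (-π)..π, (fderiv ℝ g (x + r • dir θ) (r • dir' θ) (r • dir' θ)
      - r * g (x + r • dir θ) (dir θ) + v (x + r • dir θ)) * mode e θ = 0 := by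
    intro r
    have hcirc : ∀ θ, HasDerivAt (fun θ : ℝ => x + r • dir θ) (r • dir' θ) θ := fun θ =>
      ((hasDerivAt_dir θ).const_smul r).const_add x
    have hmode : ∀ θ, HasDerivAt (mode e) (-e 0 * Real.sin θ + e 1 * Real.cos θ) θ := fun θ => by
      have := ((Real.hasDerivAt_cos θ).const_mul (e 0)).add ((Real.hasDerivAt_sin θ).const_mul (e 1))
      convert! this using 1; ring
    have hmode' : ∀ θ, HasDerivAt (fun θ => -e 0 * Real.sin θ + e 1 * Real.cos θ) (-mode e θ) θ :=
      fun θ => by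
        have := ((Real.hasDerivAt_sin θ).const_mul (-e 0)).add
          ((Real.hasDerivAt_cos θ).const_mul (e 1))
        convert! this using 1; rw [mode]; ring
    have hder : ∀ θ, HasDerivAt (fun θ => g (x + r • dir θ) (r • dir' θ) * mode e θ
        - v (x + r • dir θ) * (-e 0 * Real.sin θ + e 1 * Real.cos θ))
        ((fderiv ℝ g (x + r • dir θ) (r • dir' θ) (r • dir' θ)
          - r * g (x + r • dir θ) (dir θ) + v (x + r • dir θ)) * mode e θ) θ := by
      intro θ
      have h1 := (hgd _).comp_hasDerivAt θ (hcirc θ)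
      have h2 := h1.clm_apply ((hasDerivAt_dir' θ).const_smul r)
      have h3 := (hvd _).comp_hasDerivAt θ (hcirc θ)
      convert! (h2.mul (hmode θ)).sub (h3.mul (hmode' θ)) using 1
      simp
      ring
    rw [intervalIntegral.integral_eq_sub_of_hasDerivAt (fun θ _ => hder θ)
      (Continuous.intervalIntegrable (by fun_prop) _ _)]
    simp [dir, dir', mode]
  have hode : ∀ r, r ^ 2 * M2 r + r * M1 r - M r = r ^ 2 * F r := by
    intro r
    have h0 : ∫ θ in (-π)..π, (r ^ 2 * (lap v (x + r • dir θ) * mode e θ) -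
        (r ^ 2 * (fderiv ℝ g (x + r • dir θ) (dir θ) (dir θ) * mode e θ)
         + r * (g (x + r • dir θ) (dir θ) * mode e θ) - v (x + r • dir θ) * mode e θ)) = 0 := by
      rw [← hang r]
      congr 1; ext θ
      rw [lap_eq_dir ((hgd _).differentiableAt) θ]
      simp only [map_smul, smul_apply, smul_eq_mul]
      ring
    have hI : ∀ f : ℝ → ℝ, Continuous f → IntervalIntegrable f volume (-π) π :=
      fun f hf => hf.intervalIntegrable _ _
    rw [intervalIntegral.integral_sub (hI _ (by fun_prop)) (hI _ (by fun_prop)),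
      intervalIntegral.integral_sub (hI _ (by fun_prop)) (hI _ (by fun_prop)),
      intervalIntegral.integral_add (hI _ (by fun_prop)) (hI _ (by fun_prop)),
      intervalIntegral.integral_const_mul, intervalIntegral.integral_const_mul,
      intervalIntegral.integral_const_mul] at h0
    linarith
  have hM0 : M 0 = 0 := by
    simp only [hM, zero_smul, add_zero]
    rw [intervalIntegral.integral_const_mul, integral_mode, mul_zero]
  have hM10 : M1 0 = π * g x e := by
    simp only [hM1, zero_smul, add_zero]
    exact integral_clm_mode _ _
  have hFc : Continuous F := by
    apply intervalIntegral.continuous_parametric_intervalIntegral_of_continuous'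
    simp only [Function.uncurry_def]
    fun_prop
  have hMc : Continuous M := continuous_iff_continuousAt.2 fun r => (hM' r).continuousAt
  have hM1c : Continuous M1 := continuous_iff_continuousAt.2 fun r => (hM1' r).continuousAt
  -- `q` is `M(r) / r`, extended continuously to `r = 0` by the value `M'(0)`
  set q := dslope M 0 with hq
  have hqc : Continuous q := by
    rw [continuous_iff_continuousAt]
    intro r
    rcases eq_or_ne r 0 with rfl | hr
    · exact continuousAt_dslope_same.2 (hM' 0).differentiableAt
    · exact (continuousAt_dslope_of_ne hr).2 hMc.continuousAt
  have hq0 : q 0 = M1 0 := by rw [hq, dslope_same, (hM' 0).deriv]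
  have hqr : ∀ r, r ≠ 0 → q r = M r / r := fun r hr => by
    rw [hq, dslope_of_ne _ hr, slope_def_field, hM0]; simp
  have hfin := intervalIntegral.integral_eq_sub_of_hasDerivAt_of_le (a := 0) (b := R)
    (f := fun r => M1 r + q r - (r ^ 2 * M1 r - r * M r) / R ^ 2)
    (f' := fun r => F r * (1 - r ^ 2 / R ^ 2)) hR.le (by fun_prop) ?_
    (Continuous.intervalIntegrable (by fun_prop) _ _)
  · rw [hfin, hqr R hR.ne', hq0, hM10]
    field_simp
    ring
  · intro r hr
    have hr0 : r ≠ 0 := hr.1.ne'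
    have h1 : HasDerivAt (fun r => M r / r) ((M1 r * r - M r * 1) / r ^ 2) r :=
      (hM' r).div (hasDerivAt_id r) hr0
    have h2 : HasDerivAt q ((M1 r * r - M r * 1) / r ^ 2) r :=
      h1.congr_of_eventuallyEq (by
        filter_upwards [isOpen_ne.mem_nhds hr0] with s hs using hqr s hs)
    have h3 := ((hM1' r).add h2).sub ((((hasDerivAt_pow 2 r).mul (hM1' r)).sub
      ((hasDerivAt_id r).mul (hM' r))).div_const (R ^ 2))
    convert! h3 using 1
    have := hode r
    have h4 : F r = (r ^ 2 * M2 r + r * M1 r - M r) / r ^ 2 := by rw [this]; field_simp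
    rw [h4]
    simp
    field_simp
    ring

/-! ### Lattice coordinates and mean values -/

theorem VortexData.det_ne_zero (D : VortexData) : D.a1 0 * D.a2 1 - D.a2 0 * D.a1 1 ≠ 0 := by
  intro hdet
  have h := LinearIndependent.pair_iff.1 D.indep
  have h1 := h (D.a2 1) (-D.a1 1) (by
    ext i; fin_cases i
    · simp; linarith
    · simp; ring)
  have h0 := h (D.a2 0) (-D.a1 0) (by
    ext i; fin_cases i
    · simp; ring
    · simp; linarith)
  have := (h 1 0 (by
    ext i; fin_cases i
    · simpa using h0.2
    · simpa using h1.2)).1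
  exact one_ne_zero this

theorem VortexData.exists_coords (D : VortexData) (y : R2) :
    ∃ s t : ℝ, y = s • D.a1 + t • D.a2 := by
  have hdet := D.det_ne_zero
  set d := D.a1 0 * D.a2 1 - D.a2 0 * D.a1 1 with hd
  refine ⟨(y 0 * D.a2 1 - y 1 * D.a2 0) / d, (y 1 * D.a1 0 - y 0 * D.a1 1) / d, ?_⟩
  ext i; fin_cases i
  · simp; field_simp; rw [hd]; ring
  · simp; field_simp; rw [hd]; ring

/-- Every point is a lattice translate of a point of the closed fundamental cell. -/
theorem VortexData.exists_reduce (D : VortexData) (y : R2) :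
    ∃ w ∈ lattice D.a1 D.a2, ∃ s ∈ Icc (0:ℝ) 1, ∃ t ∈ Icc (0:ℝ) 1,
      y = (s • D.a1 + t • D.a2) + w := by
  obtain ⟨s, t, rfl⟩ := D.exists_coords y
  refine ⟨(⌊s⌋ : ℝ) • D.a1 + (⌊t⌋ : ℝ) • D.a2, ⟨⌊s⌋, ⌊t⌋, rfl⟩, Int.fract s,
    ⟨Int.fract_nonneg s, (Int.fract_lt_one s).le⟩, Int.fract t,
    ⟨Int.fract_nonneg t, (Int.fract_lt_one t).le⟩, ?_⟩
  conv_lhs => rw [← Int.fract_add_floor s, ← Int.fract_add_floor t]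
  module

theorem exists_max_periodic (D : VortexData) {f : R2 → ℝ} (hf : Continuous f)
    (hp : Periodic2 D.a1 D.a2 f) : ∃ x0, ∀ x, f x ≤ f x0 := by
  obtain ⟨p, -, hmax⟩ := ((isCompact_Icc (a := (0:ℝ)) (b := 1)).prod
    (isCompact_Icc (a := (0:ℝ)) (b := 1))).exists_isMaxOn ⟨(0, 0), by simp⟩
    (f := fun p : ℝ × ℝ => f (p.1 • D.a1 + p.2 • D.a2)) (by fun_prop)
  refine ⟨p.1 • D.a1 + p.2 • D.a2, fun x => ?_⟩
  obtain ⟨w, hw, s, hs, t, ht, rfl⟩ := D.exists_reduce x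
  rw [hp _ w hw]
  exact hmax (show (s, t) ∈ _ from ⟨hs, ht⟩)

/-- A periodic function with gradient bounded by `G` oscillates by at most `G` times the sum of the
lengths of the periods, since any two points can be joined modulo the lattice inside one cell. -/
theorem osc_le (D : VortexData) {v : R2 → ℝ} (hv : Differentiable ℝ v)
    (hp : Periodic2 D.a1 D.a2 v) {G : ℝ} (hG : ∀ x, ‖fderiv ℝ v x‖ ≤ G) (x y : R2) :
    |v (x + y) - v x| ≤ G * (‖D.a1‖ + ‖D.a2‖) := by
  obtain ⟨w, hw, s, hs, t, ht, rfl⟩ := D.exists_reduce y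
  rw [← add_assoc, hp _ w hw]
  have h1 := Convex.norm_image_sub_le_of_norm_fderiv_le (𝕜 := ℝ) (f := v) (s := univ)
    (x := x) (y := x + (s • D.a1 + t • D.a2)) (fun x _ => hv x) (fun x _ => hG x) convex_univ
    (mem_univ _) (mem_univ _)
  rw [Real.norm_eq_abs] at h1
  refine h1.trans ?_
  have hG0 : 0 ≤ G := (norm_nonneg _).trans (hG 0)
  gcongr
  rw [add_sub_cancel_left]
  refine (norm_add_le _ _).trans ?_
  rw [norm_smul, norm_smul, Real.norm_eq_abs, Real.norm_eq_abs, abs_of_nonneg hs.1,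
    abs_of_nonneg ht.1]
  gcongr
  · exact mul_le_of_le_one_left (norm_nonneg _) hs.2
  · exact mul_le_of_le_one_left (norm_nonneg _) ht.2

/-- The square `[-k, k]²` of lattice coordinates. -/
def box (k : ℕ) : Set (ℝ × ℝ) := Icc (-(k:ℝ), -(k:ℝ)) ((k:ℝ), (k:ℝ))

theorem isCompact_box (k : ℕ) : IsCompact (box k) := isCompact_Icc

theorem volume_box (k : ℕ) : volume.real (box k) = (2 * k) ^ 2 := by
  rw [box, ← Icc_prod_Icc, Measure.volume_eq_prod, measureReal_prod_prod, Real.volume_real_Icc_of_le (by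
    have : (0:ℝ) ≤ k := by positivity
    linarith)]
  ring

/-- The Laplacian of a periodic function has mean zero: in lattice coordinates it is a divergence,
and opposite sides of the box contribute equal boundary terms. -/
theorem integral_lap_box (D : VortexData) {v : R2 → ℝ} (hv : ContDiff ℝ (⊤ : ℕ∞) v)
    (hp : Periodic2 D.a1 D.a2 v) (k : ℕ) (x : R2) :
    ∫ t in box k, lap v (x + t.1 • D.a1 + t.2 • D.a2) = 0 := by
  have hg := contDiff_fderiv hv
  have hpg : ∀ y, ∀ w ∈ lattice D.a1 D.a2, fderiv ℝ v (y + w) = fderiv ℝ v y := by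
    intro y w hw
    rw [← fderiv_comp_add_right]
    congr 1
    exact funext fun z => hp z w hw
  have hlc := continuous_lap hv
  have hlap : ∀ y, lap v y = _ := fun y => lap_eq (hg.differentiable (by simp) y)
  set g := fderiv ℝ v with hgdef
  have hDc : Continuous (fderiv ℝ g) := hg.continuous_fderiv (by simp)
  have hgd : ∀ y, HasFDerivAt g (fderiv ℝ g y) y :=
    fun y => (hg.differentiable (by simp) y).hasFDerivAt
  -- `a₁, b₁, a₂, b₂` write the Laplacian as `D²v(a₁, b₁) + D²v(a₂, b₂)`, a divergence in lattice
  -- coordinates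
  obtain ⟨α, β, h0⟩ := D.exists_coords (EuclideanSpace.single 0 1)
  obtain ⟨γ, δ, h1⟩ := D.exists_coords (EuclideanSpace.single 1 1)
  set b1 := α • (EuclideanSpace.single 0 1 : R2) + γ • (EuclideanSpace.single 1 1 : R2) with hb1
  set b2 := β • (EuclideanSpace.single 0 1 : R2) + δ • (EuclideanSpace.single 1 1 : R2) with hb2
  have hdiv : ∀ y, lap v y = fderiv ℝ g y D.a1 b1 + fderiv ℝ g y D.a2 b2 := by
    intro y
    have e0 : fderiv ℝ g y (EuclideanSpace.single 0 1) = α • fderiv ℝ g y D.a1 + β • fderiv ℝ g y D.a2 := by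
      rw [h0]; simp
    have e1 : fderiv ℝ g y (EuclideanSpace.single 1 1) = γ • fderiv ℝ g y D.a1 + δ • fderiv ℝ g y D.a2 := by
      rw [h1]; simp
    rw [hlap y, e0, e1, hb1, hb2]
    simp only [add_apply, smul_apply, smul_eq_mul, map_add, map_smul]
    ring
  let T : ℝ × ℝ →L[ℝ] R2 := (ContinuousLinearMap.fst ℝ ℝ ℝ).smulRight D.a1
    + (ContinuousLinearMap.snd ℝ ℝ ℝ).smulRight D.a2
  have hT : ∀ t : ℝ × ℝ, T t = t.1 • D.a1 + t.2 • D.a2 := fun t => by simp [T]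
  have hTd : ∀ t, HasFDerivAt (fun t => x + T t) T t := fun t => T.hasFDerivAt.const_add x
  have hfd : ∀ (b : R2) (t : ℝ × ℝ), HasFDerivAt (fun t => g (x + T t) b)
      ((ContinuousLinearMap.apply ℝ ℝ b).comp ((fderiv ℝ g (x + T t)).comp T)) t := by
    intro b t
    exact (ContinuousLinearMap.apply ℝ ℝ b).hasFDerivAt.comp t ((hgd _).comp t (hTd t))
  have hc : ∀ b : R2, Continuous (fun t : ℝ × ℝ => g (x + T t) b) := fun b =>
    continuous_iff_continuousAt.2 fun t => (hfd b t).continuousAt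
  have hkk : (-(k:ℝ), -(k:ℝ)) ≤ ((k:ℝ), (k:ℝ)) := by
    constructor <;> simp
  have key := integral_divergence_prod_Icc_of_hasFDerivAt_of_le
    (fun t : ℝ × ℝ => g (x + T t) b1) (fun t => g (x + T t) b2) _ _
    (-(k:ℝ), -(k:ℝ)) ((k:ℝ), (k:ℝ)) hkk (hc b1).continuousOn (hc b2).continuousOn
    (fun t _ => hfd b1 t) (fun t _ => hfd b2 t) ?_
  · have e : ∀ t : ℝ × ℝ, lap v (x + t.1 • D.a1 + t.2 • D.a2)
        = ((ContinuousLinearMap.apply ℝ ℝ b1).comp ((fderiv ℝ g (x + T t)).comp T)) (1, 0)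
        + ((ContinuousLinearMap.apply ℝ ℝ b2).comp ((fderiv ℝ g (x + T t)).comp T)) (0, 1) := by
      intro t
      rw [add_assoc, ← hT, hdiv]
      simp [hT]
    simp_rw [e, box]
    rw [key]
    have q1 : ∀ s : ℝ, g (x + T (s, (k:ℝ))) = g (x + T (s, -(k:ℝ))) := by
      intro s
      rw [← hpg (x + T (s, -(k:ℝ))) (((0:ℤ):ℝ) • D.a1 + ((2 * k : ℤ):ℝ) • D.a2) ⟨0, 2 * k, rfl⟩]
      congr 1
      simp only [hT]
      push_cast
      module
    have q2 : ∀ s : ℝ, g (x + T ((k:ℝ), s)) = g (x + T (-(k:ℝ), s)) := by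
      intro s
      rw [← hpg (x + T (-(k:ℝ), s)) (((2 * k : ℤ):ℝ) • D.a1 + ((0:ℤ):ℝ) • D.a2) ⟨2 * k, 0, rfl⟩]
      congr 1
      simp only [hT]
      push_cast
      module
    simp only [q1, q2]
    ring
  · refine Continuous.integrableOn_Icc ?_
    simp
    fun_prop

/-- The integral of a nonnegative function over a disc of radius `R`, in polar coordinates, is
bounded by a constant times its integral over a square `[-k, k]²` of lattice coordinates, with the
constant and `k` independent of the function and of the centre. -/
theorem disc_le_box (D : VortexData) {R : ℝ} (hR : 0 < R) :
    ∃ K : ℝ, 0 ≤ K ∧ ∃ k : ℕ, 0 < k ∧ ∀ h : R2 → ℝ, Continuous h → (∀ y, 0 ≤ h y) → ∀ x : R2,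
      ∫ r in (0:ℝ)..R, r * ∫ θ in (-π)..π, h (x + r • dir θ)
        ≤ K * ∫ t in box k, h (x + t.1 • D.a1 + t.2 • D.a2) := by
  have hdet := D.det_ne_zero
  set d := D.a1 0 * D.a2 1 - D.a2 0 * D.a1 1 with hd
  -- the change from lattice to Cartesian coordinates, on `ℝ × ℝ` because `polarCoord` lives there
  let L : ℝ × ℝ →L[ℝ] ℝ × ℝ :=
    ((D.a1 0) • ContinuousLinearMap.fst ℝ ℝ ℝ + (D.a2 0) • ContinuousLinearMap.snd ℝ ℝ ℝ).prod
    ((D.a1 1) • ContinuousLinearMap.fst ℝ ℝ ℝ + (D.a2 1) • ContinuousLinearMap.snd ℝ ℝ ℝ)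
  have hL : ∀ t : ℝ × ℝ, L t = (D.a1 0 * t.1 + D.a2 0 * t.2, D.a1 1 * t.1 + D.a2 1 * t.2) :=
    fun t => by simp [L]
  have hinj : Function.Injective L := by
    rw [injective_iff_map_eq_zero]
    intro t ht
    rw [hL, Prod.mk_eq_zero] at ht
    have e1 : d * t.1 = 0 := by rw [hd]; linear_combination D.a2 1 * ht.1 - D.a2 0 * ht.2
    have e2 : d * t.2 = 0 := by rw [hd]; linear_combination D.a1 0 * ht.2 - D.a1 1 * ht.1
    exact Prod.ext ((mul_eq_zero.1 e1).resolve_left hdet) ((mul_eq_zero.1 e2).resolve_left hdet)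
  obtain ⟨k, hk⟩ := exists_nat_gt
    ((|R| * (|D.a1 0| + |D.a1 1| + |D.a2 0| + |D.a2 1|)) / |d|)
  have hdpos : 0 < |d| := abs_pos.2 hdet
  have hk0 : (0:ℝ) < k := lt_of_le_of_lt (by positivity) hk
  refine ⟨|L.det|, abs_nonneg _, k, by exact_mod_cast hk0, ?_⟩
  intro h hh hpos x
  let P : ℝ × ℝ → R2 := fun p => x + p.1 • EuclideanSpace.single 0 1 + p.2 • EuclideanSpace.single 1 1
  have hPc : Continuous P := by fun_prop
  have hPL : ∀ t : ℝ × ℝ, P (L t) = x + t.1 • D.a1 + t.2 • D.a2 := by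
    intro t
    ext i; fin_cases i <;> simp [P, hL] <;> ring
  have hPpol : ∀ p : ℝ × ℝ, P (polarCoord.symm p) = x + p.1 • dir p.2 := by
    intro p
    ext i; fin_cases i <;> simp [P, dir]
  have hcover : ∀ r ∈ Ioc 0 R, ∀ θ, polarCoord.symm (r, θ) ∈ L '' box k := by
    intro r hr θ
    refine ⟨((D.a2 1 * (r * Real.cos θ) - D.a2 0 * (r * Real.sin θ)) / d,
      (D.a1 0 * (r * Real.sin θ) - D.a1 1 * (r * Real.cos θ)) / d), ?_, ?_⟩
    · have hb : ∀ a b c s : ℝ, |c| ≤ 1 → |s| ≤ 1 →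
          |a| + |b| ≤ |D.a1 0| + |D.a1 1| + |D.a2 0| + |D.a2 1| →
          |(a * (r * c) - b * (r * s)) / d| ≤ k := by
        intro a b c s hc hs hab
        refine le_trans ?_ hk.le
        rw [abs_div]
        gcongr
        refine (abs_sub _ _).trans ?_
        simp only [abs_mul]
        rw [abs_of_pos hr.1, abs_of_pos hR]
        calc |a| * (r * |c|) + |b| * (r * |s|) ≤ |a| * (r * 1) + |b| * (r * 1) := by
              have := hr.1.le
              gcongr
          _ = r * (|a| + |b|) := by ring
          _ ≤ _ := by
              gcongr
              exact hr.2
      have n1 := abs_nonneg (D.a1 0)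
      have n2 := abs_nonneg (D.a1 1)
      have n3 := abs_nonneg (D.a2 0)
      have n4 := abs_nonneg (D.a2 1)
      have i1 := abs_le.1 (hb (D.a2 1) (D.a2 0) _ _ (Real.abs_cos_le_one θ)
        (Real.abs_sin_le_one θ) (by linarith))
      have i2 := abs_le.1 (hb (D.a1 0) (D.a1 1) _ _ (Real.abs_sin_le_one θ)
        (Real.abs_cos_le_one θ) (by linarith))
      exact ⟨⟨i1.1, i2.1⟩, ⟨i1.2, i2.2⟩⟩
    · rw [hL]
      simp only [polarCoord_symm_apply]
      refine Prod.ext ?_ ?_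
      · simp only
        field_simp
        rw [hd]; ring
      · simp only
        field_simp
        rw [hd]; ring
  have hcpt : IsCompact (L '' box k) := (isCompact_box k).image L.continuous
  have e1 : ∫ r in (0:ℝ)..R, r * ∫ θ in (-π)..π, h (x + r • dir θ)
      = ∫ p in Ioc 0 R ×ˢ Ioo (-π) π, p.1 * h (P (polarCoord.symm p)) := by
    have hi : IntegrableOn (fun p : ℝ × ℝ => p.1 * h (P (polarCoord.symm p)))
        (Icc 0 R ×ˢ Icc (-π) π) := by
      refine ContinuousOn.integrableOn_compact (isCompact_Icc.prod isCompact_Icc) ?_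
      have := continuous_polarCoord_symm
      exact Continuous.continuousOn (by fun_prop)
    rw [Measure.volume_eq_prod, setIntegral_prod _ (hi.mono_set (prod_mono Ioc_subset_Icc_self Ioo_subset_Icc_self)),
      intervalIntegral.integral_of_le hR.le]
    congr 1; ext r
    rw [intervalIntegral.integral_of_le (by linarith [pi_pos]), ← integral_const_mul,
      integral_Ioc_eq_integral_Ioo]
    simp only [hPpol]
  have e2 : ∫ p in Ioc 0 R ×ˢ Ioo (-π) π, p.1 * h (P (polarCoord.symm p))
      ≤ ∫ p in polarCoord.target,
          p.1 • (L '' box k).indicator (fun p => h (P p)) (polarCoord.symm p) := by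
    have hsub : Ioc 0 R ×ˢ Ioo (-π) π ⊆ polarCoord.target := by
      rw [polarCoord_target]
      exact prod_mono Ioc_subset_Ioi_self subset_rfl
    have hmeas : MeasurableSet (Ioc 0 R ×ˢ Ioo (-π) π) := measurableSet_Ioc.prod measurableSet_Ioo
    have htm : MeasurableSet polarCoord.target := polarCoord.open_target.measurableSet
    have hint : IntegrableOn (fun p : ℝ × ℝ =>
        p.1 • (L '' box k).indicator (fun p => h (P p)) (polarCoord.symm p)) polarCoord.target := by
      have hf : Integrable ((L '' box k).indicator (fun p => h (P p))) :=
        ((by fun_prop : Continuous fun p => h (P p)).continuousOn.integrableOn_compact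
          hcpt).integrable_indicator hcpt.measurableSet
      have := (integrableOn_image_iff_integrableOn_abs_det_fderiv_smul volume htm
        (fun p _ => (hasFDerivAt_polarCoord_symm p).hasFDerivWithinAt)
        polarCoord.symm.injOn _).1 (hf.integrableOn (s := polarCoord.symm '' polarCoord.target))
      refine this.congr_fun (fun p hp => ?_) htm
      rw [polarCoord_target] at hp
      simp only
      rw [det_fderivPolarCoordSymm, abs_of_pos hp.1]
    rw [setIntegral_congr_fun hmeas (g := fun p : ℝ × ℝ =>
      p.1 • (L '' box k).indicator (fun p => h (P p)) (polarCoord.symm p))]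
    · refine setIntegral_mono_set hint ?_ hsub.eventuallyLE
      filter_upwards [ae_restrict_mem htm] with p hp
      rw [polarCoord_target] at hp
      exact smul_nonneg hp.1.le (indicator_nonneg (fun _ _ => hpos _) _)
    · intro p hp
      simp only [smul_eq_mul]
      rw [indicator_of_mem (hcover p.1 hp.1 p.2)]
  rw [e1]
  refine e2.trans_eq ?_
  rw [integral_comp_polarCoord_symm, integral_indicator hcpt.measurableSet,
    integral_image_eq_integral_abs_det_fderiv_smul volume (isCompact_box k).measurableSet
      (fun t _ => L.hasFDerivAt.hasFDerivWithinAt) hinj.injOn]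
  simp only [hPL, smul_eq_mul, integral_const_mul]

/-! ### The Laplacian at extrema -/

/-- The Laplacian is nonpositive at a local maximum. -/
theorem lap_nonpos_of_isLocalMax {f : R2 → ℝ} {x : R2} (hf : ContDiffAt ℝ 2 f x)
    (hmax : IsLocalMax f x) : lap f x ≤ 0 := by
  refine Finset.sum_nonpos fun i _ => ?_
  set e : R2 := EuclideanSpace.single i 1
  have hd : DifferentiableAt ℝ (fderiv ℝ f) x :=
    (hf.fderiv_right (m := 1) (by norm_num)).differentiableAt (by norm_num)
  have hev : ∀ᶠ y in 𝓝 x, DifferentiableAt ℝ f y := by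
    filter_upwards [hf.eventually (by simp)] with y hy using hy.differentiableAt (by simp)
  have hray : ∀ t, HasDerivAt (fun t : ℝ => x + t • e) e t := fun t => by
    simpa using ((hasDerivAt_id t).smul_const e).const_add x
  have hx0 : x + (0:ℝ) • e = x := by simp
  have htend : Tendsto (fun t : ℝ => x + t • e) (𝓝 0) (𝓝 x) := by
    have := (hray 0).continuousAt.tendsto
    rwa [hx0] at this
  set φ : ℝ → ℝ := fun t => f (x + t • e) with hφ
  have hφ1 : deriv φ =ᶠ[𝓝 0] fun t => fderiv ℝ f (x + t • e) e := by
    filter_upwards [htend.eventually hev] with t ht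
    exact (ht.hasFDerivAt.comp_hasDerivAt t (hray t)).deriv
  have hφ2 : deriv (deriv φ) 0 = fderiv ℝ (fun y => fderiv ℝ f y e) x e := by
    rw [hφ1.deriv_eq]
    have hde : DifferentiableAt ℝ (fun y => fderiv ℝ f y e) (x + (0:ℝ) • e) := by
      rw [hx0]; exact hd.clm_apply (by fun_prop)
    have := (hde.hasFDerivAt.comp_hasDerivAt 0 (hray 0)).deriv
    rw [hx0] at this
    exact this
  have hφmax : IsLocalMax φ 0 := by
    have := htend.eventually hmax
    simpa [IsLocalMax, IsMaxFilter, hφ] using this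
  by_contra! hpos
  rw [← hφ2] at hpos
  have hφc : ContinuousAt φ 0 := by
    have : ContinuousAt f (x + (0:ℝ) • e) := by rw [hx0]; exact hf.continuousAt
    exact ContinuousAt.comp this (hray 0).continuousAt
  have hmin := isLocalMin_of_deriv_deriv_pos hpos hφmax.deriv_eq_zero hφc
  have hconst : φ =ᶠ[𝓝 0] fun _ => φ 0 := by
    filter_upwards [hφmax, hmin] with t h1 h2 using le_antisymm h1 h2
  have : deriv (deriv φ) 0 = 0 := by
    rw [hconst.deriv.deriv_eq]; simp
  exact hpos.ne' this

theorem lap_neg (f : R2 → ℝ) (x : R2) : lap (fun y => -f y) x = -lap f x := by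
  simp only [lap, fderiv_fun_neg, neg_apply, Finset.sum_neg_distrib]

theorem lap_congr {f g : R2 → ℝ} {x : R2} (h : f =ᶠ[𝓝 x] g) : lap f x = lap g x := by
  unfold lap
  refine Finset.sum_congr rfl fun i _ => ?_
  have : (fun y => fderiv ℝ f y (EuclideanSpace.single i 1)) =ᶠ[𝓝 x]
      fun y => fderiv ℝ g y (EuclideanSpace.single i 1) := by
    filter_upwards [h.fderiv (𝕜 := ℝ)] with y hy
    rw [hy]
  rw [this.fderiv_eq]

theorem lap_comb {f g h : R2 → ℝ} {x : R2} (hf : ContDiffAt ℝ 2 f x) (hg : ContDiffAt ℝ 2 g x)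
    (hh : ContDiffAt ℝ 2 h x) (c : ℝ) :
    lap (fun y => f y - g y + h y / c) x = lap f x - lap g x + lap h x / c := by
  have hdd : ∀ {f : R2 → ℝ}, ContDiffAt ℝ 2 f x → DifferentiableAt ℝ (fderiv ℝ f) x := fun hf =>
    (hf.fderiv_right (m := 1) (by norm_num)).differentiableAt (by norm_num)
  have hev : ∀ {f : R2 → ℝ}, ContDiffAt ℝ 2 f x → ∀ᶠ y in 𝓝 x, DifferentiableAt ℝ f y := by
    intro f hf
    filter_upwards [hf.eventually (by simp)] with y hy using hy.differentiableAt (by simp)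
  have h1 : fderiv ℝ (fun y => f y - g y + h y / c) =ᶠ[𝓝 x]
      fun y => fderiv ℝ f y - fderiv ℝ g y + c⁻¹ • fderiv ℝ h y := by
    filter_upwards [hev hf, hev hg, hev hh] with y h1 h2 h3
    simp only [div_eq_inv_mul]
    exact ((h1.hasFDerivAt.sub h2.hasFDerivAt).add (h3.hasFDerivAt.const_mul c⁻¹)).fderiv
  have h2 := (((hdd hf).hasFDerivAt.sub (hdd hg).hasFDerivAt).add
    ((hdd hh).hasFDerivAt.const_smul c⁻¹)).congr_of_eventuallyEq h1
  rw [lap_eq h2.differentiableAt, lap_eq (hdd hf), lap_eq (hdd hg), lap_eq (hdd hh), h2.fderiv]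
  simp only [add_apply, sub_apply, smul_apply, smul_eq_mul]
  ring

/-! ### The singular set and the maximum principle -/

theorem lattice_neg {a1 a2 w : R2} (hw : w ∈ lattice a1 a2) : -w ∈ lattice a1 a2 := by
  obtain ⟨k, l, rfl⟩ := hw
  exact ⟨-k, -l, by push_cast; module⟩

theorem lattice_add {a1 a2 w w' : R2} (hw : w ∈ lattice a1 a2) (hw' : w' ∈ lattice a1 a2) :
    w + w' ∈ lattice a1 a2 := by
  obtain ⟨k, l, rfl⟩ := hw
  obtain ⟨k', l', rfl⟩ := hw'
  exact ⟨k + k', l + l', by push_cast; module⟩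

theorem VortexData.sing_add (D : VortexData) {w : R2} (hw : w ∈ lattice D.a1 D.a2) (x : R2) :
    x + w ∈ D.sing ↔ x ∈ D.sing := by
  constructor
  · rintro ⟨i, w', hw', h⟩
    exact ⟨i, w' + -w, lattice_add hw' (lattice_neg hw), by
      rw [← add_assoc, ← h]; abel⟩
  · rintro ⟨i, w', hw', rfl⟩
    exact ⟨i, w' + w, lattice_add hw' hw, by abel⟩

theorem VortexData.countable_sing (D : VortexData) : D.sing.Countable := by
  have : D.sing ⊆ range fun q : Fin D.n × ℤ × ℤ => D.p q.1 + ((q.2.1 : ℝ) • D.a1 + (q.2.2 : ℝ) • D.a2) := by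
    rintro x ⟨i, w, ⟨k, l, rfl⟩, rfl⟩
    exact ⟨(i, k, l), rfl⟩
  exact (countable_range _).mono this

/-- `Z + Λ` is locally finite, because `Λ` is discrete. -/
theorem VortexData.finite_sing_inter_ball (D : VortexData) (x : R2) :
    (D.sing ∩ ball x 1).Finite := by
  let b := basisOfLinearIndependentOfCardEqFinrank D.indep (by simp)
  have hlat : lattice D.a1 D.a2 ⊆ Submodule.span ℤ (range b) := by
    rintro w ⟨k, l, rfl⟩
    have h0 : D.a1 ∈ Submodule.span ℤ (range b) := Submodule.subset_span ⟨0, by simp [b]⟩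
    have h1 : D.a2 ∈ Submodule.span ℤ (range b) := Submodule.subset_span ⟨1, by simp [b]⟩
    rw [Int.cast_smul_eq_zsmul, Int.cast_smul_eq_zsmul]
    exact add_mem (Submodule.smul_mem _ k h0) (Submodule.smul_mem _ l h1)
  have hfin : ∀ i, (ball (x - D.p i) 1 ∩ lattice D.a1 D.a2).Finite := fun i =>
    (ZSpan.setFinite_inter b isBounded_ball).subset (inter_subset_inter_right _ hlat)
  refine (Set.finite_iUnion fun i => (hfin i).image (D.p i + ·)).subset ?_
  rintro y ⟨⟨i, w, hw, rfl⟩, hy⟩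
  refine mem_iUnion.2 ⟨i, w, ⟨?_, hw⟩, rfl⟩
  rw [mem_ball, dist_eq_norm] at hy ⊢
  convert hy using 2
  abel

theorem VortexData.eventually_notMem_sing (D : VortexData) (x : R2) :
    ∀ᶠ y in 𝓝 x, y ≠ x → y ∉ D.sing := by
  have hfin := (D.finite_sing_inter_ball x).subset
    (sdiff_subset : (D.sing ∩ ball x 1) \ {x} ⊆ _)
  filter_upwards [hfin.isClosed.isOpen_compl.mem_nhds (fun h => h.2 rfl),
    ball_mem_nhds x one_pos] with y hy hb hne hs
  exact hy ⟨⟨hs, hb⟩, hne⟩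

theorem VortexData.isOpen_compl_sing (D : VortexData) : IsOpen D.singᶜ := by
  rw [isOpen_iff_mem_nhds]
  intro x hx
  filter_upwards [D.eventually_notMem_sing x] with y hy
  rcases eq_or_ne y x with rfl | h
  · exact hx
  · exact hy h

/-- Near a vortex point `eᵘ` is a continuous function times `|x − pᵢ|` to the power `2mᵢ > 0`, so the
extension by `0` is continuous. -/
theorem continuous_expu {D : VortexData} {lam mu : ℝ} {u N : R2 → ℝ}
    (hs : IsMCSSolution D lam mu u N) : Continuous (D.expu u) := by
  obtain ⟨hup, -, hus, -, hlog, -, -⟩ := hs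
  rw [continuous_iff_continuousAt]
  intro x
  by_cases hx : x ∈ D.sing
  · obtain ⟨i, w, hw, rfl⟩ := id hx
    obtain ⟨ε, hε, v, hv, huv⟩ := hlog i
    have hvc : ContinuousAt v (D.p i + w - w) := by
      rw [add_sub_cancel_right]
      exact hv.continuousOn.continuousAt (ball_mem_nhds _ hε)
    have htend : Tendsto (fun y : R2 => y - w) (𝓝 (D.p i + w)) (𝓝 (D.p i)) := by
      have : ContinuousAt (fun y : R2 => y - w) (D.p i + w) := by fun_prop
      simpa [ContinuousAt] using this
    have heq : D.expu u =ᶠ[𝓝 (D.p i + w)]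
        fun y => Real.exp (v (y - w)) * ‖y - w - D.p i‖ ^ (2 * D.m i) := by
      filter_upwards [D.eventually_notMem_sing (D.p i + w),
        htend.eventually (ball_mem_nhds _ hε)] with y hy hyb
      rcases eq_or_ne y (D.p i + w) with rfl | hne
      · have := D.m_pos i
        simp [VortexData.expu, hx]
        omega
      · have hne' : y - w ≠ D.p i := fun h => hne (by rw [← h]; abel)
        have hn : 0 < ‖y - w - D.p i‖ := norm_pos_iff.2 (sub_ne_zero.2 hne')
        rw [VortexData.expu, if_neg (hy hne)]
        have : u y = u (y - w) := by
          rw [← hup (y - w) w hw, sub_add_cancel]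
        rw [this, huv _ hyb hne', Real.exp_add]
        congr 1
        rw [← Real.rpow_natCast, Real.rpow_def_of_pos hn]
        push_cast
        ring_nf
    refine ContinuousAt.congr ?_ heq.symm
    have : ContinuousAt (fun y : R2 => y - w) (D.p i + w) := by fun_prop
    exact (Real.continuous_exp.continuousAt.comp (ContinuousAt.comp (f := fun y : R2 => y - w) hvc this)).mul
      (by fun_prop)
  · have hn : D.singᶜ ∈ 𝓝 x := D.isOpen_compl_sing.mem_nhds hx
    have : ContinuousAt (fun y => Real.exp (u y)) x :=
      Real.continuous_exp.continuousAt.comp (hus.continuousOn.continuousAt hn)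
    refine this.congr ?_
    filter_upwards [hn] with y hy
    rw [VortexData.expu, if_neg hy]

theorem periodic_expu {D : VortexData} {u : R2 → ℝ} (hu : Periodic2 D.a1 D.a2 u) :
    Periodic2 D.a1 D.a2 (D.expu u) := by
  intro x w hw
  have := D.sing_add hw x
  by_cases h : x ∈ D.sing <;> simp [VortexData.expu, this, h, hu x w hw]

theorem expu_nonneg (D : VortexData) (u : R2 → ℝ) (x : R2) : 0 ≤ D.expu u x := by
  unfold VortexData.expu
  split_ifs
  · exact le_rfl
  · exact (Real.exp_pos _).le

/-- The maximum principle. At a maximum of `eᵘ` the first equation gives `λ eᵘ ≤ N`, so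
`λ sup eᵘ ≤ sup N`; inserted in the second equation at a maximum of `N` this gives `N ≤ λ`, and then
`eᵘ ≤ 1`. Nonnegativity of `N` is the second equation at a minimum. -/
theorem mcs_bounds {D : VortexData} {lam mu : ℝ} (hl : 0 < lam) (hm : 0 < mu) {u N : R2 → ℝ}
    (hs : IsMCSSolution D lam mu u N) :
    (∀ x, D.expu u x ≤ 1) ∧ (∀ x, 0 ≤ N x) ∧ ∀ x, N x ≤ lam := by
  have hEc := continuous_expu hs
  obtain ⟨hup, hNp, hus, hNs, -, hequ, heqN⟩ := hs
  have hE0 := expu_nonneg D u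
  have hN2 : ∀ x, ContDiffAt ℝ 2 N x := fun x => hNs.contDiffAt.of_le (by norm_cast)
  obtain ⟨x0, hx0⟩ := exists_max_periodic D hEc (periodic_expu hup)
  obtain ⟨y0, hy0⟩ := exists_max_periodic D hNs.continuous hNp
  obtain ⟨z0, hz0⟩ := exists_max_periodic D (f := fun x => -N x) hNs.continuous.neg
    (fun x w hw => congrArg Neg.neg (hNp x w hw))
  -- at the maximum of `e^u`
  have h1 : 0 < D.expu u x0 → lam * D.expu u x0 ≤ N x0 := by
    intro hpos
    have hx : x0 ∉ D.sing := fun h => by simp [VortexData.expu, h] at hpos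
    have hn : D.singᶜ ∈ 𝓝 x0 := D.isOpen_compl_sing.mem_nhds hx
    have hlm : IsLocalMax u x0 := by
      filter_upwards [hn] with y hy
      have := hx0 y
      rw [VortexData.expu, VortexData.expu, if_neg hy, if_neg hx] at this
      exact Real.exp_le_exp.1 this
    have := lap_nonpos_of_isLocalMax ((hus.contDiffAt hn).of_le (by norm_cast)) hlm
    rw [hequ x0 hx] at this
    rw [VortexData.expu, if_neg hx]
    have h2 : mu * (lam * Real.exp (u x0) - N x0) ≤ 0 := by linarith
    have := nonpos_of_mul_nonpos_right h2 hm
    linarith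
  -- at the maximum of `N`
  have h2 : (mu + lam * D.expu u y0) * N y0 ≤ lam * (mu + lam) * D.expu u y0 := by
    have := lap_nonpos_of_isLocalMax (hN2 y0) (Eventually.of_forall hy0)
    rw [heqN y0] at this
    have h2 : mu * ((mu + lam * D.expu u y0) * N y0 - lam * (mu + lam) * D.expu u y0) ≤ 0 := by
      linarith
    have := nonpos_of_mul_nonpos_right h2 hm
    linarith
  -- at the minimum of `N`
  have h3 : 0 ≤ N z0 := by
    have := lap_nonpos_of_isLocalMax (f := fun x => -N x) (hN2 z0).neg
      (Eventually.of_forall hz0)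
    rw [lap_neg, heqN z0] at this
    have hE := hE0 z0
    by_contra! hneg
    have : 0 < mu * (mu + lam * D.expu u z0) * (-N z0) := by
      have : 0 < -N z0 := by linarith
      positivity
    have : 0 ≤ lam * mu * (mu + lam) * D.expu u z0 := by positivity
    linarith
  have h4 : N y0 ≤ lam := by
    by_contra! hgt
    have hEy := hE0 y0
    rcases hEy.eq_or_lt with h0 | hpos
    · rw [← h0] at h2
      have : 0 < (mu + lam * 0) * N y0 := by
        have : 0 < N y0 := by linarith
        positivity
      linarith
    · have a1 : lam * D.expu u y0 ≤ N y0 :=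
        (mul_le_mul_of_nonneg_left (hx0 y0) hl.le).trans
          ((h1 (hpos.trans_le (hx0 y0))).trans (hy0 x0))
      have a2 : 0 < lam * D.expu u y0 := by positivity
      nlinarith [mul_pos a2 (sub_pos.2 hgt), mul_le_mul_of_nonneg_left a1 hm.le]
  refine ⟨fun x => ?_, fun x => ?_, fun x => (hy0 x).trans h4⟩
  · by_contra! hgt
    have hpos : 1 < D.expu u x0 := hgt.trans_le (hx0 x)
    have := (h1 (by linarith)).trans ((hy0 x0).trans h4)
    nlinarith
  · have := hz0 x
    linarith

/-! ### The gradient estimate -/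

theorem abs_integral_angle_le (f : ℝ → ℝ) (e : R2) {B : ℝ} (hf : ∀ θ, |f θ| ≤ B) :
    |∫ θ in (-π)..π, f θ * mode e θ| ≤ 2 * π * B * ‖e‖ := by
  have := intervalIntegral.norm_integral_le_of_norm_le_const (a := -π) (b := π)
    (f := fun θ => f θ * mode e θ) (C := B * ‖e‖) (fun θ _ => by
      rw [Real.norm_eq_abs, abs_mul]
      exact mul_le_mul (hf θ) (abs_mode_le e θ) (abs_nonneg _) ((abs_nonneg _).trans (hf θ)))
  rw [Real.norm_eq_abs, show π - -π = 2 * π by ring, abs_of_pos two_pi_pos] at this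
  linarith

/-- a uniform gradient bound `‖∇(u − u₀ + N/μ)‖_{L^∞} ≤ Cλ`, with `C`
depending only on the lattice and the vortex data. -/
theorem stmt3 (D : VortexData) (u0 : R2 → ℝ) (hu0 : IsU0 D u0) :
    ∃ C > (0:ℝ), ∀ lam mu : ℝ, 0 < lam → 0 < mu →
      ∀ u N : R2 → ℝ, IsMCSSolution D lam mu u N →
        ∀ v : R2 → ℝ, ContDiff ℝ (⊤ : ℕ∞) v → Periodic2 D.a1 D.a2 v →
          (∀ x ∉ D.sing, v x = u x - u0 x + N x / mu) →
          ∀ x : R2, ‖fderiv ℝ v x‖ ≤ C * lam := by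
  set d := ‖D.a1‖ + ‖D.a2‖ with hd
  have hdpos : 0 < d :=
    add_pos_of_pos_of_nonneg (norm_pos_iff.2 (D.indep.ne_zero 0)) (norm_nonneg _)
  obtain ⟨K, hK, k, hk, hdisc⟩ := disc_le_box D (R := 4 * d) (by positivity)
  have hM : 0 ≤ D.M := Finset.sum_nonneg fun i _ => Nat.cast_nonneg _
  set c := 4 * π * D.M with hc
  have hc0 : 0 ≤ c := by positivity
  set V : ℝ := (2 * k) ^ 2 with hV
  have hVpos : 0 < V := by positivity
  refine ⟨2 + K * (2 * c * V) / π, by positivity, ?_⟩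
  intro lam mu hl hm u N hs v hv hvp hvu
  have hEc := continuous_expu hs
  obtain ⟨hE1, hN0, hN1⟩ := mcs_bounds hl hm hs
  have hE0 := expu_nonneg D u
  obtain ⟨hup, hNp, hus, hNs, -, hequ, heqN⟩ := hs
  obtain ⟨-, hu0s, -, hequ0, -⟩ := hu0
  have hNc := hNs.continuous
  have hlc := continuous_lap hv
  set h : R2 → ℝ := fun x => lam * D.expu u x * (lam - N x) with hh
  have hhc : Continuous h := by fun_prop
  have hh0 : ∀ x, 0 ≤ h x := fun x =>
    mul_nonneg (mul_nonneg hl.le (hE0 x)) (sub_nonneg.2 (hN1 x))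
  have hh1 : ∀ x, h x ≤ lam ^ 2 := fun x => by
    have a1 : lam * D.expu u x ≤ lam := mul_le_of_le_one_right hl.le (hE1 x)
    have a2 : lam - N x ≤ lam := by linarith [hN0 x]
    calc h x ≤ lam * lam := mul_le_mul a1 a2 (sub_nonneg.2 (hN1 x)) hl.le
      _ = lam ^ 2 := by ring
  have hlapv : ∀ x, lap v x = c - h x := by
    have hoff : EqOn (lap v) (fun x => c - h x) D.singᶜ := by
      intro x hx
      have hn : D.singᶜ ∈ 𝓝 x := D.isOpen_compl_sing.mem_nhds hx
      have h2 : ((2:ℕ∞) : WithTop ℕ∞) ≤ ((⊤ : ℕ∞) : WithTop ℕ∞) := by norm_cast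
      have : v =ᶠ[𝓝 x] fun y => u y - u0 y + N y / mu := by
        filter_upwards [hn] with y hy using hvu y hy
      rw [lap_congr this, lap_comb ((hus.contDiffAt hn).of_le h2) ((hu0s.contDiffAt hn).of_le h2)
        (hNs.contDiffAt.of_le h2), hequ x hx, hequ0 x hx, heqN x]
      simp only [hh, hc, VortexData.expu, if_neg (show x ∉ D.sing from hx)]
      field_simp
      ring
    exact congrFun (hlc.ext_on (D.countable_sing.dense_compl ℝ) (by fun_prop) hoff)
  have hbox : ∀ x, ∫ t in box k, (c - h (x + t.1 • D.a1 + t.2 • D.a2)) = 0 := fun x => by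
    rw [← integral_lap_box D hv hvp k x]
    simp only [hlapv]
  have hint : ∀ (f : R2 → ℝ) (x : R2), Continuous f →
      IntegrableOn (fun t : ℝ × ℝ => f (x + t.1 • D.a1 + t.2 • D.a2)) (box k) := fun f x hf =>
    (by fun_prop : Continuous fun t : ℝ × ℝ => f (x + t.1 • D.a1 + t.2 • D.a2)).continuousOn.integrableOn_compact
      (isCompact_box k)
  have hcV : ∀ a : ℝ, ∫ _ in box k, a = a * V := fun a => by
    rw [setIntegral_const, volume_box, smul_eq_mul, mul_comm]
  have hicst : ∀ a : ℝ, IntegrableOn (fun _ : ℝ × ℝ => a) (box k) := fun a =>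
    continuousOn_const.integrableOn_compact (isCompact_box k)
  have hhV : ∀ x, ∫ t in box k, h (x + t.1 • D.a1 + t.2 • D.a2) = c * V := fun x => by
    have := hbox x
    rw [integral_sub (hicst c) (hint h x hhc), hcV] at this
    linarith
  -- the mean of `h` is `c`, and `h ≤ λ²`
  have hcl : c ≤ lam ^ 2 := by
    have : ∫ t in box k, h ((0:R2) + t.1 • D.a1 + t.2 • D.a2) ≤ ∫ _ in box k, lam ^ 2 :=
      setIntegral_mono (hint h 0 hhc) (hicst _) fun t => hh1 _
    rw [hhV, hcV] at this
    exact le_of_mul_le_mul_right this hVpos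
  have hlap1 : ∀ x, |lap v x| ≤ lam ^ 2 := fun x => by
    rw [hlapv, abs_le]
    constructor <;> linarith [hh0 x, hh1 x]
  have hlap2 : ∀ x, |lap v x| ≤ c + h x := fun x => by
    rw [hlapv, abs_le]
    constructor <;> linarith [hh0 x, hh1 x]
  obtain ⟨x, hx⟩ := exists_max_periodic D (f := fun x => ‖fderiv ℝ v x‖)
    ((hv.continuous_fderiv (by simp)).norm) (fun y w hw => by
      simp only
      rw [← fderiv_comp_add_right]
      congr 2
      exact funext fun z => hvp z w hw)
  intro y
  refine (hx y).trans ?_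
  set G := ‖fderiv ℝ v x‖ with hG
  set P : ℝ → ℝ := fun r => ∫ θ in (-π)..π, (c + h (x + r • dir θ)) with hP
  have hdc := continuous_dir
  have hPc : Continuous P := by
    apply intervalIntegral.continuous_parametric_intervalIntegral_of_continuous'
    simp only [Function.uncurry_def]
    fun_prop
  have hP0 : ∀ r, 0 ≤ P r := fun r =>
    intervalIntegral.integral_nonneg (by linarith [pi_pos]) fun θ _ => add_nonneg hc0 (hh0 _)
  have hPint : ∫ r in (0:ℝ)..(4 * d), r * P r ≤ K * (2 * c * V) := by
    have := hdisc (fun y => c + h y) (by fun_prop) (fun y => add_nonneg hc0 (hh0 y)) x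
    rw [integral_add (hicst c) (hint h x hhc), hcV, hhV] at this
    refine this.trans_eq (by ring)
  have hest : ∀ e, 2 * π * |fderiv ℝ v x e| ≤ (π * G + 2 * π * lam + lam * (K * (2 * c * V))) * ‖e‖ := by
    intro e
    have hform := gradient_formula hv x e (R := 4 * d) (by positivity)
    have hme := continuous_mode e
    have hvc := hv.continuous
    -- the mode has mean zero, so `v` may be replaced by `v - v x`
    have hMbd : |∫ θ in (-π)..π, v (x + (4 * d) • dir θ) * mode e θ| ≤ 2 * π * (G * d) * ‖e‖ := by
      have e1 : ∫ θ in (-π)..π, v (x + (4 * d) • dir θ) * mode e θ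
          = ∫ θ in (-π)..π, (v (x + (4 * d) • dir θ) - v x) * mode e θ := by
        simp only [sub_mul]
        rw [intervalIntegral.integral_sub (Continuous.intervalIntegrable (by fun_prop) _ _)
          (Continuous.intervalIntegrable (by fun_prop) _ _), intervalIntegral.integral_const_mul,
          integral_mode]
        simp
      rw [e1]
      exact abs_integral_angle_le _ e fun θ => osc_le D (hv.differentiable (by simp)) hvp hx x _
    set F : ℝ → ℝ := fun r => ∫ θ in (-π)..π, lap v (x + r • dir θ) * mode e θ with hF
    have hFc : Continuous F := by
      apply intervalIntegral.continuous_parametric_intervalIntegral_of_continuous'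
      simp only [Function.uncurry_def]
      fun_prop
    have hF1 : ∀ r, |F r| ≤ 2 * π * lam ^ 2 * ‖e‖ := fun r =>
      abs_integral_angle_le _ e fun θ => hlap1 _
    have hF2 : ∀ r, |F r| ≤ P r * ‖e‖ := fun r => by
      rw [hP, ← intervalIntegral.integral_mul_const, ← Real.norm_eq_abs]
      refine intervalIntegral.norm_integral_le_of_norm_le (by linarith [pi_pos])
        (Eventually.of_forall fun θ _ => ?_) (Continuous.intervalIntegrable (by fun_prop) _ _)
      rw [Real.norm_eq_abs, abs_mul]
      exact mul_le_mul (hlap2 _) (abs_mode_le e θ) (abs_nonneg _) (add_nonneg hc0 (hh0 _))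
    have hker : ∀ r ∈ Ioc 0 (4 * d), |1 - r ^ 2 / (4 * d) ^ 2| ≤ 1 := fun r hr => by
      have a1 : 0 ≤ r ^ 2 / (4 * d) ^ 2 := by positivity
      have a2 : r ^ 2 / (4 * d) ^ 2 ≤ 1 := by
        rw [div_le_one (by positivity)]
        exact pow_le_pow_left₀ hr.1.le hr.2 2
      rw [abs_le]; constructor <;> linarith
    have hker' : ∀ r ∈ Ioc 0 (4 * d), ‖F r * (1 - r ^ 2 / (4 * d) ^ 2)‖ ≤ |F r| := fun r hr => by
      rw [norm_mul, Real.norm_eq_abs, Real.norm_eq_abs]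
      exact mul_le_of_le_one_right (abs_nonneg _) (hker r hr)
    -- `1 / λ` balances `λ² ρ`, from the pointwise bound, against `1 / ρ`, from the `L¹` bound
    set ρ := min (1 / lam) (4 * d) with hρ
    have hρ0 : 0 < ρ := lt_min (by positivity) (by positivity)
    have hρd : ρ ≤ 4 * d := min_le_right _ _
    have hI : ∀ a b, IntervalIntegrable (fun r => F r * (1 - r ^ 2 / (4 * d) ^ 2)) volume a b :=
      fun a b => Continuous.intervalIntegrable (by fun_prop) _ _
    have hin : |∫ r in (0:ℝ)..ρ, F r * (1 - r ^ 2 / (4 * d) ^ 2)| ≤ 2 * π * lam * ‖e‖ := by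
      have := intervalIntegral.norm_integral_le_of_norm_le_const (a := 0) (b := ρ)
        (f := fun r => F r * (1 - r ^ 2 / (4 * d) ^ 2)) (C := 2 * π * lam ^ 2 * ‖e‖)
        (fun r hr => by
          rw [uIoc_of_le hρ0.le] at hr
          exact (hker' r ⟨hr.1, hr.2.trans hρd⟩).trans (hF1 r))
      rw [Real.norm_eq_abs, sub_zero, abs_of_pos hρ0] at this
      refine this.trans ?_
      calc 2 * π * lam ^ 2 * ‖e‖ * ρ ≤ 2 * π * lam ^ 2 * ‖e‖ * (1 / lam) := by
            gcongr
            exact min_le_left _ _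
        _ = _ := by field_simp
    have hout : |∫ r in ρ..(4 * d), F r * (1 - r ^ 2 / (4 * d) ^ 2)|
        ≤ lam * (K * (2 * c * V)) * ‖e‖ := by
      have h1 : ‖∫ r in ρ..(4 * d), F r * (1 - r ^ 2 / (4 * d) ^ 2)‖
          ≤ ∫ r in ρ..(4 * d), lam * ‖e‖ * (r * P r) := by
        refine intervalIntegral.norm_integral_le_of_norm_le hρd
          (Eventually.of_forall fun r hr => ?_) (Continuous.intervalIntegrable (by fun_prop) _ _)
        refine ((hker' r ⟨hρ0.trans hr.1, hr.2⟩).trans (hF2 r)).trans ?_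
        have hlr : 1 ≤ lam * r := by
          have : 1 / lam < r := (min_lt_iff.1 hr.1).resolve_right (not_lt.2 hr.2)
          rw [div_lt_iff₀ hl] at this
          linarith
        calc P r * ‖e‖ = 1 * (P r * ‖e‖) := by ring
          _ ≤ lam * r * (P r * ‖e‖) :=
            mul_le_mul_of_nonneg_right hlr (mul_nonneg (hP0 r) (norm_nonneg _))
          _ = _ := by ring
      have h2 : ∫ r in ρ..(4 * d), r * P r ≤ ∫ r in (0:ℝ)..(4 * d), r * P r := by
        refine intervalIntegral.integral_mono_interval hρ0.le hρd le_rfl ?_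
          (Continuous.intervalIntegrable (by fun_prop) _ _)
        filter_upwards [ae_restrict_mem measurableSet_Ioc] with r hr
        exact mul_nonneg hr.1.le (hP0 r)
      rw [intervalIntegral.integral_const_mul, Real.norm_eq_abs] at h1
      refine h1.trans ?_
      calc lam * ‖e‖ * ∫ r in ρ..(4 * d), r * P r ≤ lam * ‖e‖ * (K * (2 * c * V)) := by
            gcongr
            exact h2.trans hPint
        _ = _ := by ring
    rw [← intervalIntegral.integral_add_adjacent_intervals (hI 0 ρ) (hI ρ (4 * d))] at hform
    have habs : 2 * π * |fderiv ℝ v x e| = |2 * π * fderiv ℝ v x e| := by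
      rw [abs_mul, abs_of_pos two_pi_pos]
    rw [habs, hform]
    refine (abs_sub _ _).trans ?_
    -- the radius `4 d` makes the boundary term half of the total, to be absorbed
    have hbd : |2 * (∫ θ in (-π)..π, v (x + (4 * d) • dir θ) * mode e θ) / (4 * d)|
        ≤ π * G * ‖e‖ := by
      rw [abs_div, abs_mul, abs_of_pos (show (0:ℝ) < 4 * d by positivity), abs_two,
        div_le_iff₀ (by positivity)]
      linarith
    have := (abs_add_le (∫ r in (0:ℝ)..ρ, F r * (1 - r ^ 2 / (4 * d) ^ 2))
      (∫ r in ρ..(4 * d), F r * (1 - r ^ 2 / (4 * d) ^ 2)))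
    linarith
  have hfinal : G ≤ (π * G + 2 * π * lam + lam * (K * (2 * c * V))) / (2 * π) := by
    refine ContinuousLinearMap.opNorm_le_bound _ (by positivity) fun e => ?_
    rw [Real.norm_eq_abs, div_mul_eq_mul_div, le_div_iff₀ two_pi_pos]
    linarith [hest e]
  rw [le_div_iff₀ two_pi_pos] at hfinal
  have h5 : π * G ≤ π * ((2 + K * (2 * c * V) / π) * lam) := by
    have : π * ((2 + K * (2 * c * V) / π) * lam) = 2 * π * lam + lam * (K * (2 * c * V)) := by
      field_simp
    rw [this]
    linarith
  exact le_of_mul_le_mul_left h5 pi_pos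

end
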